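/- arXiv:1106.1400 — 2 statements merged into one kernel-verified Lean document; each statement's English description precedes it below -/
import Mathlib

section
/- Let ξ be an integrable random variable and let (Y^i)_{i∈I} be a nonempty family of supermartingales such that Y^i_t ≥ E[ξ | ℱ_t] P-almost surely for every i ∈ I and every t ∈ [0,T]. Let X = (X_t)_{t∈[0,T]} be an adapted process such that, for each t, X_t is an essential infimum of the family {Y^i_t : i ∈ I}, i.e. X_t ≤ Y^i_t P-almost surely for every i ∈ I, and every ℱ_t-measurable random variable Z with Z ≤ Y^i_t P-almost surely for all i ∈ I satisfies Z ≤ X_t P-almost surely. Then X_t is integrable with E[ξ | ℱ_t] ≤ X_t P-almost surely for every t, and X is a supermartingale with respect to (ℱ_t)_{t∈[0,T]}. -/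
open MeasureTheory Filter Set

noncomputable section

/-- A process `Y` is a supermartingale on the time interval `[0, T]` with respect to the
filtration `ℱ` and the measure `P`: it is adapted, integrable, and satisfies
`E[Y_t | ℱ_s] ≤ Y_s` a.s. for all `0 ≤ s ≤ t ≤ T`. -/
def SupermartingaleOn {Ω : Type*} {m0 : MeasurableSpace Ω}
    (ℱ : MeasureTheory.Filtration ℝ m0) (P : Measure Ω) (T : ℝ)
    (Y : ℝ → Ω → ℝ) : Prop :=
  (∀ t ∈ Set.Icc (0 : ℝ) T, StronglyMeasurable[ℱ t] (Y t)) ∧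
  (∀ t ∈ Set.Icc (0 : ℝ) T, Integrable (Y t) P) ∧
  ∀ s ∈ Set.Icc (0 : ℝ) T, ∀ t ∈ Set.Icc (0 : ℝ) T, s ≤ t →
    (P[Y t | ℱ s]) ≤ᵐ[P] Y s

/-- Proposition 3.4 (first assertion): the adapted process of pointwise essential infima of a
nonempty family of supermartingales, each dominating the martingale `E[ξ | ℱ_·]`, dominates
`E[ξ | ℱ_·]`, is integrable, and is itself a supermartingale. -/
theorem essInf_supermartingale
    {Ω : Type*} {m0 : MeasurableSpace Ω} (ℱ : MeasureTheory.Filtration ℝ m0)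
    (P : Measure Ω) [IsProbabilityMeasure P] (T : ℝ) (hT : 0 < T)
    (ξ : Ω → ℝ) (hξ : Integrable ξ P)
    {ι : Type*} [Nonempty ι] (Y : ι → ℝ → Ω → ℝ)
    (hY : ∀ i, SupermartingaleOn ℱ P T (Y i))
    (hYξ : ∀ i, ∀ t ∈ Set.Icc (0 : ℝ) T, (P[ξ | ℱ t]) ≤ᵐ[P] Y i t)
    (X : ℝ → Ω → ℝ)
    (hXadapted : ∀ t ∈ Set.Icc (0 : ℝ) T, StronglyMeasurable[ℱ t] (X t))
    (hXle : ∀ t ∈ Set.Icc (0 : ℝ) T, ∀ i, X t ≤ᵐ[P] Y i t)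
    (hXinf : ∀ t ∈ Set.Icc (0 : ℝ) T, ∀ Z : Ω → ℝ, StronglyMeasurable[ℱ t] Z →
      (∀ i, Z ≤ᵐ[P] Y i t) → Z ≤ᵐ[P] X t) :
    (∀ t ∈ Set.Icc (0 : ℝ) T, Integrable (X t) P ∧ (P[ξ | ℱ t]) ≤ᵐ[P] X t) ∧
      SupermartingaleOn ℱ P T X := by
  have h1 : ∀ t ∈ Set.Icc (0 : ℝ) T, (P[ξ | ℱ t]) ≤ᵐ[P] X t := fun t ht =>
    hXinf t ht _ stronglyMeasurable_condExp (fun i => hYξ i t ht)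
  have h2 : ∀ t ∈ Set.Icc (0 : ℝ) T, Integrable (X t) P := by
    intro t ht
    obtain ⟨i⟩ := ‹Nonempty ι›
    exact integrable_of_le_of_le (((hXadapted t ht).mono (ℱ.le t)).aestronglyMeasurable)
      (h1 t ht) (hXle t ht i) integrable_condExp ((hY i).2.1 t ht)
  refine ⟨fun t ht => ⟨h2 t ht, h1 t ht⟩, hXadapted, h2, fun s hs t ht hst => ?_⟩
  refine hXinf s hs _ stronglyMeasurable_condExp (fun i => ?_)
  exact (condExp_mono (h2 t ht) ((hY i).2.1 t ht) (hXle t ht i)).trans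
    ((hY i).2.2 s hs t ht hst)
end
end

section
/- Let E₀ : L¹(Ω, ℱ, P) → ℝ ∪ {+∞} be a functional which is (i) monotone: if ξ ≤ ζ P-almost surely then E₀(ξ) ≤ E₀(ζ); and (ii) continuous along increasing sequences: whenever (ζ^n)_{n≥1} ⊂ L¹ increases P-almost surely to some ζ ∈ L¹, then E₀(ζ) = lim_{n→∞} E₀(ζ^n). Then E₀ is lower semicontinuous with respect to L¹-convergence: for every sequence (ξ^n) ⊂ L¹ converging to ξ in L¹, one has E₀(ξ) ≤ liminf_{n→∞} E₀(ξ^n). -/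
open MeasureTheory Filter Set

noncomputable section

/-- Theorem 4.9 (abstract core): a functional `E₀` on `L¹`, with values in `ℝ ∪ {+∞}`, which is
monotone and continuous along a.s. increasing `L¹`-sequences, is lower semicontinuous with
respect to `L¹`-convergence. -/
theorem lsc_of_monotone_and_monotone_convergence
    {Ω : Type*} {m0 : MeasurableSpace Ω} (P : Measure Ω) [IsProbabilityMeasure P]
    (E₀ : (Ω → ℝ) → EReal)
    (hne_bot : ∀ ξ, E₀ ξ ≠ ⊥)
    (hmono : ∀ ξ ζ : Ω → ℝ, Integrable ξ P → Integrable ζ P →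
      ξ ≤ᵐ[P] ζ → E₀ ξ ≤ E₀ ζ)
    (hmonconv : ∀ (ζs : ℕ → Ω → ℝ) (ζ : Ω → ℝ), (∀ n, Integrable (ζs n) P) →
      Integrable ζ P → (∀ᵐ ω ∂P, Monotone fun n => ζs n ω) →
      (∀ᵐ ω ∂P, Tendsto (fun n => ζs n ω) atTop (nhds (ζ ω))) →
      Tendsto (fun n => E₀ (ζs n)) atTop (nhds (E₀ ζ)))
    (ξs : ℕ → Ω → ℝ) (ξ : Ω → ℝ)
    (hξs : ∀ n, Integrable (ξs n) P) (hξ : Integrable ξ P)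
    (hL1conv : Tendsto (fun n => ∫ ω, |ξs n ω - ξ ω| ∂P) atTop (nhds 0)) :
    E₀ ξ ≤ liminf (fun n => E₀ (ξs n)) atTop := by
  by_contra hlt
  rw [not_le] at hlt
  obtain ⟨c, hc1, hc2⟩ := exists_between hlt
  have hfreq : ∃ᶠ n in atTop, E₀ (ξs n) < c := frequently_lt_of_liminf_lt (h := hc1)
  have hev : ∀ k : ℕ, ∀ᶠ n in atTop, ∫ ω, |ξs n ω - ξ ω| ∂P < (1 / 2 : ℝ) ^ k := fun k =>
    hL1conv.eventually (gt_mem_nhds (by positivity))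
  obtain ⟨φ, -, hφ⟩ := extraction_forall_of_frequently
    (fun k => hfreq.and_eventually (hev k))
  set d : ℕ → Ω → ℝ := fun k ω => |ξs (φ k) ω - ξ ω| with hd
  have hd0 : ∀ k ω, 0 ≤ d k ω := fun k ω => abs_nonneg _
  have hdint : ∀ k, Integrable (d k) P := fun k => ((hξs (φ k)).sub hξ).abs
  set G : Ω → ENNReal := fun ω => ∑' k, ENNReal.ofReal (d k ω) with hG
  have hGm : AEMeasurable G P :=
    AEMeasurable.ennreal_tsum fun k => (hdint k).aemeasurable.ennreal_ofReal
  have hGint : ∫⁻ ω, G ω ∂P ≠ ⊤ := by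
    rw [hG, lintegral_tsum fun k => (hdint k).aemeasurable.ennreal_ofReal]
    have h1 : ∀ k, ∫⁻ ω, ENNReal.ofReal (d k ω) ∂P ≤ ENNReal.ofReal ((1 / 2 : ℝ) ^ k) := by
      intro k
      rw [← ofReal_integral_eq_lintegral_ofReal (hdint k) (ae_of_all _ (hd0 k))]
      exact ENNReal.ofReal_le_ofReal (hφ k).2.le
    exact ne_top_of_le_ne_top summable_geometric_two.tsum_ofReal_ne_top
      (ENNReal.tsum_le_tsum h1)
  have hGfin : ∀ᵐ ω ∂P, G ω < ⊤ := ae_lt_top' hGm hGint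
  have hDint : Integrable (fun ω => (G ω).toReal) P :=
    integrable_toReal_of_lintegral_ne_top hGm hGint
  have hsum : ∀ᵐ ω ∂P, HasSum (fun k => d k ω) (G ω).toReal := by
    filter_upwards [hGfin] with ω hω
    have h := ENNReal.hasSum_toReal (f := fun k => ENNReal.ofReal (d k ω)) hω.ne
    simp only [ENNReal.toReal_ofReal (hd0 _ ω)] at h
    rw [hG, ENNReal.tsum_toReal_eq (fun k => ENNReal.ofReal_ne_top)]
    simpa only [ENNReal.toReal_ofReal (hd0 _ ω)] using h
  set ζ : ℕ → Ω → ℝ := fun n ω => ξ ω - ((G ω).toReal - ∑ k ∈ Finset.range n, d k ω) with hζ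
  have hζint : ∀ n, Integrable (ζ n) P := fun n =>
    hξ.sub (hDint.sub (integrable_finsetSum _ fun k _ => hdint k))
  have hlim := hmonconv ζ ξ hζint hξ
    (ae_of_all _ fun ω => monotone_nat_of_le_succ fun n => by
      simp only [hζ, Finset.sum_range_succ]
      linarith [hd0 n ω])
    (by
      filter_upwards [hsum] with ω hω
      have h := (hω.tendsto_sum_nat.const_sub (G ω).toReal).const_sub (ξ ω)
      simpa [hζ] using h)
  refine absurd (le_of_tendsto' hlim fun n => ?_) hc2.not_ge
  refine (hmono _ (ξs (φ n)) (hζint n) (hξs _) ?_).trans (hφ n).1.le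
  filter_upwards [hsum] with ω hω
  have h1 := sum_le_hasSum (Finset.range (n + 1)) (fun k _ => hd0 k ω) hω
  rw [Finset.sum_range_succ] at h1
  have h2 : -(ξs (φ n) ω - ξ ω) ≤ d n ω := neg_le_abs _
  simp only [hζ]
  linarith
end
end
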